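/- Let n ≥ 2 be an integer and x_1,…,x_n > 0 not all equal. For the Gamma model (the Stacy model with α = 1) and the (μ,φ)-reference prior π(φ,μ) = √(ψ'(φ))/μ, the integral ∫_0^∞ ∫_0^∞ φ^r μ^s √(ψ'(φ)) μ^{−1} Γ(φ)^{−n} (∏_{i=1}^n x_i^{φ−1}) μ^{nφ} exp(−μ Σ_{i=1}^n x_i) dμ dφ is finite for all natural numbers r, s (in particular for r = s = 0, so the posterior is proper, with all posterior moments finite). -/

import Mathlib

/-!
The inner integral is a Gamma integral, and finiteness is decided by the behaviour of the outer
integrand as `φ → 0` and as `φ → ∞`. Write `S = ∑ x i` and `P = ∏ x i`.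

Smoothness of `log Γ` on `(0, ∞)` and the recurrence `ψ'(x + 1) = ψ'(x) - 1 / x²` give all that is
needed on the prior: `√ψ'` is bounded on `[1, ∞)` and is at most `C / φ` on `(0, 1]`
(`sqrt_trigamma_bound`).

On `(0, 1]` one has `1 / Γ(φ) ≤ D φ`, so `√ψ'(φ) / Γ(φ) ^ n` is of order `φ ^ (n - 1)`, hence at
most of order `φ` since `n ≥ 2`. This factor cancels the divergence `Γ(n φ) ~ 1 / (n φ)` of the
inner integral, which is therefore bounded (`near_zero`).

On `(1, ∞)` Stirling's formula is avoided. By the strict AM-GM inequality there is `a < S` with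
`q = P (n / a) ^ n < 1` (`exists_rate`). With `u = φ - 1`, splitting
`exp (-S μ) = exp (-a μ) exp (-(S - a) μ)` and maximising the first part against a power of `μ` gives
`μ ^ (n u) exp (-a μ) ≤ Γ(u + 1) ^ n ((n / a) ^ n) ^ u` (`rpow_mul_exp_neg_le`). The factor
`Γ(φ) ^ n` cancels, and what remains is a constant times `φ ^ r q ^ u` times an integrable function
of `μ` not depending on `φ` (`at_infinity`); the geometric decay makes this integrable in `φ`.
-/

open MeasureTheory Real Filter Topology

/-- The digamma function `ψ(x) = d/dx log Γ(x)`. -/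
noncomputable def digamma (x : ℝ) : ℝ := deriv (fun t => Real.log (Real.Gamma t)) x

/-- The trigamma function `ψ'(x)`, the derivative of the digamma function. -/
noncomputable def trigamma (x : ℝ) : ℝ := deriv digamma x

/-! ### Trigamma function: recurrence and upper bounds -/

lemma analyticAt_log_Gamma {x : ℝ} (hx : 0 < x) :
    AnalyticAt ℝ (fun t => Real.log (Real.Gamma t)) x := by
  have hΓ : AnalyticAt ℂ Complex.Gamma (x : ℂ) := by
    have hd : DifferentiableOn ℂ Complex.Gamma {z : ℂ | 0 < z.re} := fun z hz =>
      (Complex.differentiableAt_Gamma z fun m h => by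
        have hz' : 0 < z.re := hz
        rw [h] at hz'
        simp only [Complex.neg_re, Complex.natCast_re] at hz'
        linarith [(Nat.cast_nonneg m : (0 : ℝ) ≤ m)]).differentiableWithinAt
    exact hd.analyticAt ((isOpen_lt continuous_const Complex.continuous_re).mem_nhds (by simpa))
  have hR : AnalyticAt ℝ Real.Gamma x := hΓ.re_ofReal
  exact hR.log (Real.Gamma_pos_of_pos hx)

lemma analyticAt_digamma {x : ℝ} (hx : 0 < x) : AnalyticAt ℝ digamma x :=
  (analyticAt_log_Gamma hx).deriv

lemma continuousAt_trigamma {x : ℝ} (hx : 0 < x) : ContinuousAt trigamma x :=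
  (analyticAt_digamma hx).deriv.continuousAt

lemma digamma_add_one {x : ℝ} (hx : 0 < x) : digamma (x + 1) = digamma x + x⁻¹ := by
  have h1 : (fun t => Real.log (Real.Gamma (t + 1))) =ᶠ[𝓝 x]
      fun t => Real.log (Real.Gamma t) + Real.log t := by
    filter_upwards [lt_mem_nhds hx] with t ht
    rw [Real.Gamma_add_one ht.ne', Real.log_mul ht.ne' (Real.Gamma_pos_of_pos ht).ne', add_comm]
  calc digamma (x + 1) = deriv (fun t => Real.log (Real.Gamma (t + 1))) x :=
        (deriv_comp_add_const (fun t => Real.log (Real.Gamma t)) 1 x).symm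
    _ = _ := by
      rw [h1.deriv_eq]
      exact ((analyticAt_log_Gamma hx).differentiableAt.hasDerivAt.add
        (Real.hasDerivAt_log hx.ne')).deriv

lemma trigamma_add_one {x : ℝ} (hx : 0 < x) : trigamma (x + 1) = trigamma x - (x ^ 2)⁻¹ := by
  have h1 : (fun t => digamma (t + 1)) =ᶠ[𝓝 x] fun t => digamma t + t⁻¹ := by
    filter_upwards [lt_mem_nhds hx] with t ht using digamma_add_one ht
  calc trigamma (x + 1) = deriv (fun t => digamma (t + 1)) x :=
        (deriv_comp_add_const digamma 1 x).symm
    _ = _ := by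
      rw [h1.deriv_eq, sub_eq_add_neg]
      exact ((analyticAt_digamma hx).differentiableAt.hasDerivAt.add
        (hasDerivAt_inv hx.ne')).deriv

/-- A bound on the compact interval `[1, 2]` propagates to `[1, ∞)`, because
`ψ'(x + 1) ≤ ψ'(x)`. -/
lemma trigamma_bdd : ∃ M : ℝ, 0 ≤ M ∧ ∀ x : ℝ, 1 ≤ x → trigamma x ≤ M := by
  obtain ⟨M, hM⟩ := (isCompact_Icc (a := (1 : ℝ)) (b := 2)).bddAbove_image
    (f := trigamma) fun x hx =>
      (continuousAt_trigamma (lt_of_lt_of_le one_pos hx.1)).continuousWithinAt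
  have key : ∀ k : ℕ, ∀ x : ℝ, 1 ≤ x → x ≤ k + 2 → trigamma x ≤ M := by
    intro k
    induction k with
    | zero => exact fun x h1 h2 => hM ⟨x, ⟨h1, by simpa using h2⟩, rfl⟩
    | succ k ih =>
      intro x h1 h2
      rcases le_total x 2 with h | h
      · exact hM ⟨x, ⟨h1, h⟩, rfl⟩
      · have h3 := trigamma_add_one (x := x - 1) (by linarith)
        rw [sub_add_cancel] at h3
        have h4 := ih (x - 1) (by linarith) (by push_cast at h2; linarith)
        have : 0 ≤ ((x - 1) ^ 2)⁻¹ := by positivity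
        linarith
  refine ⟨max M 0, le_max_right _ _, fun x hx => le_max_of_le_left ?_⟩
  obtain ⟨k, hk⟩ := exists_nat_ge x
  exact key k x hx (by linarith)

/-- Upper bounds for the factor `√ψ'` of the reference prior, with one constant for both ranges; the
bound `C / x` near `0` reflects `ψ'(x) = ψ'(x + 1) + 1 / x²`. -/
lemma sqrt_trigamma_bound : ∃ C : ℝ, 0 ≤ C ∧ (∀ x : ℝ, 1 ≤ x → √(trigamma x) ≤ C) ∧
    ∀ x : ℝ, 0 < x → x ≤ 1 → √(trigamma x) ≤ C / x := by
  obtain ⟨M, hM0, hM⟩ := trigamma_bdd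
  refine ⟨√(M + 1), Real.sqrt_nonneg _, fun x hx => Real.sqrt_le_sqrt (by linarith [hM x hx]),
    fun x hx hx1 => ?_⟩
  have h1 := trigamma_add_one hx
  have h2 := hM (x + 1) (by linarith)
  have h3 : trigamma x ≤ (M + 1) / x ^ 2 := by
    rw [le_div_iff₀ (by positivity)]
    have h4 : (x ^ 2)⁻¹ * x ^ 2 = 1 := inv_mul_cancel₀ (by positivity)
    have h5 : x ^ 2 ≤ 1 := pow_le_one₀ hx.le hx1
    have : trigamma x ≤ M + (x ^ 2)⁻¹ := by linarith
    nlinarith [sq_nonneg x]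
  calc √(trigamma x) ≤ √((M + 1) / x ^ 2) := Real.sqrt_le_sqrt h3
    _ = √(M + 1) / x := by rw [Real.sqrt_div' _ (by positivity), Real.sqrt_sq hx.le]

/-! ### Gamma function versus powers and exponentials -/

/-- A weak Stirling lower bound: restrict the Gamma integral to `t > u` and bound `t ^ u` below by
`u ^ u`. -/
lemma rpow_mul_exp_neg_le_Gamma {u : ℝ} (hu : 0 < u) :
    u ^ u * Real.exp (-u) ≤ Real.Gamma (u + 1) := by
  have hint : IntegrableOn (fun t : ℝ => Real.exp (-t) * t ^ u) (Set.Ioi 0) := by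
    simpa using Real.GammaIntegral_convergent (s := u + 1) (by linarith)
  have hsub : Set.Ioi u ⊆ Set.Ioi (0 : ℝ) := Set.Ioi_subset_Ioi hu.le
  calc u ^ u * Real.exp (-u) = ∫ t in Set.Ioi u, Real.exp (-t) * u ^ u := by
        rw [integral_mul_const, integral_exp_neg_Ioi, mul_comm]
    _ ≤ ∫ t in Set.Ioi u, Real.exp (-t) * t ^ u := by
        refine setIntegral_mono_on ?_ (hint.mono_set hsub) measurableSet_Ioi fun t ht => ?_
        · exact (integrableOn_exp_neg_Ioi u).mul_const _
        · have : u < t := ht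
          gcongr
    _ ≤ ∫ t in Set.Ioi 0, Real.exp (-t) * t ^ u := by
        refine setIntegral_mono_set hint ?_ hsub.eventuallyLE
        filter_upwards [ae_restrict_mem measurableSet_Ioi] with t ht
        have : 0 < t := ht
        positivity
    _ = Real.Gamma (u + 1) := by
        rw [Real.Gamma_eq_integral (by linarith)]; simp

/-- The left side is maximal in `μ` at `μ = n u / a`, with value `(n u / (a e)) ^ (n u)`; the powers of
`u` and `e` are absorbed by `Γ(u + 1) ^ n`. This replaces the asymptotics of `Γ(n φ) / Γ(φ) ^ n`. -/
lemma rpow_mul_exp_neg_le {n : ℕ} (hn : 0 < n) {a u μ : ℝ} (ha : 0 < a) (hu : 0 < u) (hμ : 0 < μ) :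
    μ ^ (n * u) * Real.exp (-(a * μ)) ≤ Real.Gamma (u + 1) ^ n * ((n / a) ^ n) ^ u := by
  have hn' : (0 : ℝ) < n := by exact_mod_cast hn
  calc μ ^ (n * u) * Real.exp (-(a * μ))
      ≤ (u ^ u * Real.exp (-u)) ^ n * ((n / a) ^ n) ^ u := by
        -- `log z ≤ z - 1`, with equality at the maximiser `z = a μ / (n u) = 1`.
        have hlog := Real.log_le_sub_one_of_pos (x := a * μ / (n * u)) (by positivity)
        rw [Real.log_div (by positivity) (by positivity), Real.log_mul ha.ne' hμ.ne',
          Real.log_mul hn'.ne' hu.ne'] at hlog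
        have h2 := mul_le_mul_of_nonneg_left hlog (by positivity : (0 : ℝ) ≤ n * u)
        have h3 : n * u * (a * μ / (n * u) - 1) = a * μ - n * u := by field_simp
        rw [h3] at h2
        rw [Real.rpow_def_of_pos hμ, Real.rpow_def_of_pos hu,
          Real.rpow_def_of_pos (by positivity : (0 : ℝ) < (n / a) ^ n), Real.log_pow,
          Real.log_div hn'.ne' ha.ne', ← Real.exp_add, ← Real.exp_add, ← Real.exp_nat_mul,
          ← Real.exp_add]
        refine Real.exp_le_exp.mpr ?_
        linarith
    _ ≤ _ := by
        have := rpow_mul_exp_neg_le_Gamma hu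
        gcongr

/-! ### Strict AM-GM -/

/-- Strict AM-GM, in the form that provides the geometric rate of decay: any `a` strictly between
`n (∏ x i) ^ (1 / n)` and `∑ x i` works. The strict gap below `∑ x i` keeps a factor
`exp (-(∑ x i - a) μ)` in reserve. -/
lemma exists_rate {n : ℕ} (hn : 0 < n) {x : Fin n → ℝ} (hx : ∀ i, 0 < x i)
    (hxne : ∃ i j, x i ≠ x j) :
    ∃ a : ℝ, 0 < a ∧ a < ∑ i, x i ∧ (∏ i, x i) * (n / a) ^ n < 1 := by
  have hn' : (0 : ℝ) < n := by exact_mod_cast hn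
  obtain ⟨i, j, hij⟩ := hxne
  have h := (Real.geom_mean_lt_arith_mean_weighted_iff_of_pos Finset.univ
    (fun _ => (n : ℝ)⁻¹) x (fun _ _ => by positivity) (by simp [hn'.ne'])
    (fun i _ => (hx i).le)).mpr ⟨i, Finset.mem_univ _, j, Finset.mem_univ _, hij⟩
  rw [Real.finsetProd_rpow _ _ (fun i _ => (hx i).le), ← Finset.mul_sum] at h
  set P := ∏ i, x i
  have hP : 0 < P := Finset.prod_pos fun i _ => hx i
  set g := P ^ (n : ℝ)⁻¹ with hg
  have hgn : g ^ n = P := Real.rpow_inv_natCast_pow hP.le hn.ne'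
  have hg0 : 0 < g := by positivity
  have h' : n * g < ∑ i, x i := by
    rwa [inv_mul_eq_div, lt_div_iff₀ hn', mul_comm] at h
  obtain ⟨a, ha1, ha2⟩ := exists_between h'
  have ha : 0 < a := lt_trans (by positivity) ha1
  refine ⟨a, ha, ha2, ?_⟩
  rw [← hgn, ← mul_pow]
  refine pow_lt_one₀ (by positivity) ?_ hn.ne'
  rw [← mul_div_assoc, div_lt_one ha]
  linarith

/-! ### Gamma integrals and behaviour near zero -/

lemma lintegral_Gamma {c p b : ℝ} (hc : 0 ≤ c) (hp : 0 < p) (hb : 0 < b) :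
    ∫⁻ t in Set.Ioi (0 : ℝ), ENNReal.ofReal (c * (t ^ (p - 1) * Real.exp (-(b * t)))) =
      ENNReal.ofReal (c * ((1 / b) ^ p * Real.Gamma p)) := by
  rw [← Real.integral_rpow_mul_exp_neg_mul_Ioi hp hb, ← integral_const_mul,
    ofReal_integral_eq_lintegral_ofReal]
  · have h := integrableOn_rpow_mul_exp_neg_mul_rpow (p := 1) (s := p - 1) (b := b)
      (by linarith) one_pos hb
    simp only [Real.rpow_one, neg_mul] at h
    exact h.const_mul c
  · filter_upwards [ae_restrict_mem measurableSet_Ioi] with t ht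
    have : 0 < t := ht
    positivity

/-- Since `1 / Γ(x) = x / Γ(x + 1)`, the reciprocal Gamma function vanishes linearly at `0`. -/
lemma inv_Gamma_bound : ∃ D : ℝ, 0 ≤ D ∧ ∀ x : ℝ, 0 < x → x ≤ 1 → (Real.Gamma x)⁻¹ ≤ D * x := by
  obtain ⟨D, hD⟩ := (isCompact_Icc (a := (0 : ℝ)) (b := 1)).bddAbove_image
    (f := fun x => (Real.Gamma (x + 1))⁻¹) (by
      intro x hx
      have h1 : 0 < x + 1 := by linarith [hx.1]
      have h2 : ContinuousAt Real.Gamma (x + 1) :=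
        (Real.differentiableAt_Gamma fun m h => by
          linarith [(Nat.cast_nonneg m : (0 : ℝ) ≤ m)]).continuousAt
      have h3 : ContinuousAt (fun x : ℝ => Real.Gamma (x + 1)) x :=
        ContinuousAt.comp (f := fun x : ℝ => x + 1) h2 (by fun_prop)
      exact (h3.inv₀ (Real.Gamma_pos_of_pos h1).ne').continuousWithinAt)
  refine ⟨max D 0, le_max_right _ _, fun x h0 h1 => ?_⟩
  have h := hD ⟨x, ⟨h0.le, h1⟩, rfl⟩
  have hΓ := Real.Gamma_pos_of_pos h0
  simp only [Real.Gamma_add_one h0.ne'] at h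
  calc (Real.Gamma x)⁻¹ = (x * Real.Gamma x)⁻¹ * x := by field_simp
    _ ≤ max D 0 * x := by gcongr; exact h.trans (le_max_left _ _)

/-- The pole of `Γ` at `0` is simple: `x Γ(x) = Γ(x + 1)` stays bounded. -/
lemma Gamma_mul_rpow_bound {c : ℝ} (hc : 0 < c) :
    ∃ B : ℝ, ∀ x : ℝ, 0 < x → x ≤ 1 → x * (c ^ x * Real.Gamma x) ≤ B := by
  obtain ⟨B, hB⟩ := (isCompact_Icc (a := (0 : ℝ)) (b := 1)).bddAbove_image
    (f := fun x => c ^ x * Real.Gamma (x + 1)) (by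
      intro x hx
      have h1 : 0 < x + 1 := by linarith [hx.1]
      have h2 : ContinuousAt Real.Gamma (x + 1) :=
        (Real.differentiableAt_Gamma fun m h => by
          linarith [(Nat.cast_nonneg m : (0 : ℝ) ≤ m)]).continuousAt
      have h3 : ContinuousAt (fun x : ℝ => Real.Gamma (x + 1)) x :=
        ContinuousAt.comp (f := fun x : ℝ => x + 1) h2 (by fun_prop)
      exact ((Real.continuousAt_const_rpow hc.ne').mul h3).continuousWithinAt)
  refine ⟨B, fun x h0 h1 => ?_⟩
  have h := hB ⟨x, ⟨h0.le, h1⟩, rfl⟩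
  simp only [Real.Gamma_add_one h0.ne'] at h
  linarith

lemma rpow_sub_one_bound {P x : ℝ} (hP : 0 < P) (h0 : 0 < x) (h1 : x ≤ 1) :
    P ^ (x - 1) ≤ 1 + P⁻¹ := by
  rcases le_total P 1 with h | h
  · calc P ^ (x - 1) ≤ P ^ (-1 : ℝ) := Real.rpow_le_rpow_of_exponent_ge hP h (by linarith)
      _ = P⁻¹ := Real.rpow_neg_one P
      _ ≤ _ := by linarith
  · calc P ^ (x - 1) ≤ 1 := Real.rpow_le_one_of_one_le_of_nonpos h (by linarith)
      _ ≤ _ := by have := inv_pos.mpr hP; linarith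

lemma rpow_le_add {t a b c : ℝ} (ht : 0 < t) (hab : a ≤ b) (hbc : b ≤ c) :
    t ^ b ≤ t ^ a + t ^ c := by
  have ha := Real.rpow_nonneg ht.le a
  have hc := Real.rpow_nonneg ht.le c
  rcases le_total t 1 with h | h
  · linarith [Real.rpow_le_rpow_of_exponent_ge ht h hab]
  · linarith [Real.rpow_le_rpow_of_exponent_le h hbc]

/-! ### The inner integral -/

/-- The posterior integrand with its `μ`-dependence collected into a single Gamma kernel. -/
lemma integrand_eq {n r s : ℕ} {x : Fin n → ℝ} (hx : ∀ i, 0 < x i) {φ μ : ℝ} (hμ : 0 < μ) :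
    φ ^ r * μ ^ s * √(trigamma φ) * μ ^ (-1 : ℝ) / Real.Gamma φ ^ n * (∏ i, x i ^ (φ - 1)) *
      μ ^ ((n : ℝ) * φ) * Real.exp (-(μ * ∑ i, x i)) =
    φ ^ r * √(trigamma φ) * (Real.Gamma φ)⁻¹ ^ n * (∏ i, x i) ^ (φ - 1) *
      (μ ^ (s + n * φ - 1) * Real.exp (-((∑ i, x i) * μ))) := by
  rw [Real.finsetProd_rpow _ _ (fun i _ => (hx i).le), sub_eq_add_neg (_ + _),
    Real.rpow_add hμ, Real.rpow_add hμ, Real.rpow_natCast, mul_comm μ (∑ i, x i), div_eq_mul_inv,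
    inv_pow]
  ring

/-- The inner integral is bounded for `φ ∈ (0, 1]`. -/
lemma near_zero {n : ℕ} (hn : 2 ≤ n) {x : Fin n → ℝ} (hx : ∀ i, 0 < x i) (r s : ℕ) :
    ∃ B : ℝ, ∀ φ : ℝ, 0 < φ → φ ≤ 1 → ∫⁻ μ in Set.Ioi (0:ℝ),
        ENNReal.ofReal (φ ^ r * μ ^ s * √(trigamma φ) * μ ^ (-1 : ℝ) /
          Real.Gamma φ ^ n * (∏ i, x i ^ (φ - 1)) * μ ^ ((n : ℝ) * φ) *
          Real.exp (-(μ * ∑ i, x i))) ≤ ENNReal.ofReal B := by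
  have hn2 : (2 : ℝ) ≤ n := by exact_mod_cast hn
  have hP : 0 < ∏ i, x i := Finset.prod_pos fun i _ => hx i
  have hS : 0 < ∑ i, x i := Finset.sum_pos (fun i _ => hx i) ⟨⟨0, by omega⟩, Finset.mem_univ _⟩
  set P := ∏ i, x i with hPdef
  set S := ∑ i, x i with hSdef
  obtain ⟨C, hC0, -, hC⟩ := sqrt_trigamma_bound
  obtain ⟨D, hD0, hD⟩ := inv_Gamma_bound
  obtain ⟨B, hB⟩ := Gamma_mul_rpow_bound (c := 1 / S) (by positivity)
  set K := C * D ^ n * (1 + P⁻¹) with hK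
  have hK0 : 0 ≤ K := by positivity
  have hs0 : (0 : ℝ) ≤ s := by positivity
  refine ⟨K * B + K * ((1 / S) ^ ((s : ℝ) + n) * Real.Gamma (s + n)), fun φ h0 h1 => ?_⟩
  have hΓ := Real.Gamma_pos_of_pos h0
  have hcoef : φ ^ r * √(trigamma φ) * (Real.Gamma φ)⁻¹ ^ n * P ^ (φ - 1) ≤ K * φ := by
    have e1 : φ ^ r ≤ 1 := pow_le_one₀ h0.le h1
    have e2 := hC φ h0 h1
    -- `φ ^ 2` is what is needed: one factor cancels `√ψ' ≤ C / φ`, the other the inner integral.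
    have e3 : (Real.Gamma φ)⁻¹ ^ n ≤ D ^ n * φ ^ 2 := by
      calc (Real.Gamma φ)⁻¹ ^ n ≤ (D * φ) ^ n :=
            pow_le_pow_left₀ (inv_nonneg.mpr hΓ.le) (hD φ h0 h1) n
        _ = D ^ n * φ ^ n := mul_pow _ _ _
        _ ≤ D ^ n * φ ^ 2 :=
            mul_le_mul_of_nonneg_left (pow_le_pow_of_le_one h0.le h1 hn) (by positivity)
    have e4 := rpow_sub_one_bound hP h0 h1
    calc φ ^ r * √(trigamma φ) * (Real.Gamma φ)⁻¹ ^ n * P ^ (φ - 1)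
        ≤ 1 * (C / φ) * (D ^ n * φ ^ 2) * (1 + P⁻¹) := by gcongr
      _ = K * φ := by rw [hK]; field_simp
  calc _ ≤ ∫⁻ μ in Set.Ioi (0:ℝ),
        (ENNReal.ofReal ((K * φ) * (μ ^ (φ - 1) * Real.exp (-(S * μ)))) +
        ENNReal.ofReal (K * (μ ^ ((s + n : ℝ) - 1) * Real.exp (-(S * μ))))) := by
        refine setLIntegral_mono' measurableSet_Ioi fun μ hμ => ?_
        have hμ : 0 < μ := hμ
        rw [integrand_eq hx hμ, ← ENNReal.ofReal_add (by positivity) (by positivity)]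
        refine ENNReal.ofReal_le_ofReal ?_
        -- The first power governs `μ ≤ 1`, the second `μ ≥ 1`, and its exponent is free of `φ`.
        have e5 : μ ^ (s + n * φ - 1) ≤ μ ^ (φ - 1) + μ ^ ((s + n : ℝ) - 1) :=
          rpow_le_add hμ (by nlinarith) (by nlinarith)
        calc _ ≤ (K * φ) * ((μ ^ (φ - 1) + μ ^ ((s + n : ℝ) - 1)) * Real.exp (-(S * μ))) := by
              gcongr
          _ = (K * φ) * (μ ^ (φ - 1) * Real.exp (-(S * μ))) +
              (K * φ) * (μ ^ ((s + n : ℝ) - 1) * Real.exp (-(S * μ))) := by ring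
          _ ≤ _ := by
              gcongr
              exact mul_le_of_le_one_right hK0 h1
    _ = ENNReal.ofReal (K * φ * ((1 / S) ^ φ * Real.Gamma φ)) +
        ENNReal.ofReal (K * ((1 / S) ^ ((s : ℝ) + n) * Real.Gamma (s + n))) := by
        rw [lintegral_add_left (by fun_prop), lintegral_Gamma (by positivity) h0 hS,
          lintegral_Gamma hK0 (by linarith) hS]
    _ = ENNReal.ofReal (K * φ * ((1 / S) ^ φ * Real.Gamma φ) +
          K * ((1 / S) ^ ((s : ℝ) + n) * Real.Gamma (s + n))) := by
        have : 0 < Real.Gamma ((s : ℝ) + n) := Real.Gamma_pos_of_pos (by linarith)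
        rw [ENNReal.ofReal_add (by positivity) (by positivity)]
    _ ≤ _ := by
        refine ENNReal.ofReal_le_ofReal ?_
        have := mul_le_mul_of_nonneg_left (hB φ h0 h1) hK0
        linarith

/-- The inner integral decays geometrically in `φ`, up to the factor `φ ^ r`. -/
lemma at_infinity {n : ℕ} (hn : 0 < n) {x : Fin n → ℝ} (hx : ∀ i, 0 < x i)
    (hxne : ∃ i j, x i ≠ x j) (r s : ℕ) :
    ∃ B q : ℝ, 0 ≤ B ∧ 0 < q ∧ q < 1 ∧ ∀ φ : ℝ, 1 < φ → ∫⁻ μ in Set.Ioi (0:ℝ),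
        ENNReal.ofReal (φ ^ r * μ ^ s * √(trigamma φ) * μ ^ (-1 : ℝ) /
          Real.Gamma φ ^ n * (∏ i, x i ^ (φ - 1)) * μ ^ ((n : ℝ) * φ) *
          Real.exp (-(μ * ∑ i, x i))) ≤ ENNReal.ofReal (B * (φ ^ r * q ^ (φ - 1))) := by
  have hn' : (1 : ℝ) ≤ n := by exact_mod_cast hn
  have hP : 0 < ∏ i, x i := Finset.prod_pos fun i _ => hx i
  obtain ⟨a, ha, haS, hq⟩ := exists_rate hn hx hxne
  set P := ∏ i, x i with hPdef
  set S := ∑ i, x i with hSdef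
  obtain ⟨C, hC0, hC, -⟩ := sqrt_trigamma_bound
  have hb : 0 < S - a := by linarith
  have hs0 : (0 : ℝ) ≤ s := by positivity
  have hΓ' : 0 < Real.Gamma ((s : ℝ) + n) := Real.Gamma_pos_of_pos (by linarith)
  refine ⟨C * ((1 / (S - a)) ^ ((s : ℝ) + n) * Real.Gamma (s + n)), P * (n / a) ^ n,
    by positivity, by positivity, hq, fun φ h1 => ?_⟩
  have h0 : 0 < φ := by linarith
  have hΓ := Real.Gamma_pos_of_pos h0
  set q := P * (n / a) ^ n with hqdef
  calc _ ≤ ∫⁻ μ in Set.Ioi (0:ℝ), ENNReal.ofReal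
          (C * (φ ^ r * q ^ (φ - 1)) * (μ ^ ((s + n : ℝ) - 1) * Real.exp (-((S - a) * μ)))) := by
        refine setLIntegral_mono' measurableSet_Ioi fun μ hμ => ?_
        have hμ : 0 < μ := hμ
        rw [integrand_eq hx hμ]
        refine ENNReal.ofReal_le_ofReal ?_
        have e1 := rpow_mul_exp_neg_le hn ha (u := φ - 1) (by linarith) hμ
        rw [sub_add_cancel] at e1
        have e2 : μ ^ (s + n * φ - 1) * Real.exp (-(S * μ)) =
            (μ ^ (n * (φ - 1)) * Real.exp (-(a * μ))) *
              (μ ^ ((s + n : ℝ) - 1) * Real.exp (-((S - a) * μ))) := by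
          rw [mul_mul_mul_comm, ← Real.rpow_add hμ, ← Real.exp_add]
          congr 2 <;> ring
        have e3 := hC φ h1.le
        rw [e2]
        calc φ ^ r * √(trigamma φ) * (Real.Gamma φ)⁻¹ ^ n * P ^ (φ - 1) *
              ((μ ^ (n * (φ - 1)) * Real.exp (-(a * μ))) *
                (μ ^ ((s + n : ℝ) - 1) * Real.exp (-((S - a) * μ))))
            ≤ φ ^ r * C * (Real.Gamma φ)⁻¹ ^ n * P ^ (φ - 1) *
              ((Real.Gamma φ ^ n * ((n / a) ^ n) ^ (φ - 1)) *
                (μ ^ ((s + n : ℝ) - 1) * Real.exp (-((S - a) * μ)))) := by gcongr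
          _ = _ := by
            rw [hqdef, Real.mul_rpow hP.le (by positivity), inv_pow]
            field_simp
    _ = _ := by
        rw [lintegral_Gamma (by have : 0 < q := by positivity
                                positivity) (by linarith) hb]
        congr 1
        ring

lemma tail_lt_top {B q : ℝ} (hB : 0 ≤ B) (hq0 : 0 < q) (hq1 : q < 1) (r : ℕ) :
    ∫⁻ φ in Set.Ioi (0 : ℝ), ENNReal.ofReal (B * (φ ^ r * q ^ (φ - 1))) < ⊤ := by
  have h := lintegral_Gamma (c := B / q) (p := (r : ℝ) + 1) (b := -Real.log q) (by positivity)
    (by positivity) (by linarith [Real.log_neg hq0 hq1])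
  have e : ∀ φ : ℝ, B * (φ ^ r * q ^ (φ - 1)) =
      B / q * (φ ^ ((r : ℝ) + 1 - 1) * Real.exp (-(-Real.log q * φ))) := by
    intro φ
    rw [add_sub_cancel_right, Real.rpow_natCast, Real.rpow_sub_one hq0.ne',
      Real.rpow_def_of_pos hq0]
    ring_nf
  simp only [e, h]
  exact ENNReal.ofReal_lt_top

theorem gamma_reference_prior_posterior_proper
    (n : ℕ) (hn : 2 ≤ n) (x : Fin n → ℝ) (hx : ∀ i, 0 < x i) (hxne : ∃ i j, x i ≠ x j) :
    ∀ r s : ℕ,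
      (∫⁻ φ in Set.Ioi (0:ℝ), ∫⁻ μ in Set.Ioi (0:ℝ),
        ENNReal.ofReal (φ ^ r * μ ^ s * Real.sqrt (trigamma φ) * μ ^ (-1 : ℝ) /
          Real.Gamma φ ^ n * (∏ i, x i ^ (φ - 1)) * μ ^ ((n : ℝ) * φ) *
          Real.exp (-(μ * ∑ i, x i)))) < ⊤ := by
  intro r s
  obtain ⟨B₀, h₀⟩ := near_zero hn hx r s
  obtain ⟨B, q, hB, hq0, hq1, h₁⟩ := at_infinity (by omega) hx hxne r s
  have hsplit : ∀ f : ℝ → ENNReal,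
      ∫⁻ φ in Set.Ioi (0 : ℝ), f φ ≤ (∫⁻ φ in Set.Ioc 0 1, f φ) + ∫⁻ φ in Set.Ioi 1, f φ := by
    intro f
    rw [← Set.Ioc_union_Ioi_eq_Ioi (zero_le_one' ℝ)]
    exact lintegral_union_le _ _ _
  refine (hsplit _).trans_lt (ENNReal.add_lt_top.mpr ⟨?_, ?_⟩)
  · refine (setLIntegral_mono' measurableSet_Ioc fun φ hφ => h₀ φ hφ.1 hφ.2).trans_lt ?_
    simp
  · refine (setLIntegral_mono' measurableSet_Ioi fun φ hφ => h₁ φ hφ).trans_lt ?_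
    exact (lintegral_mono_set (Set.Ioi_subset_Ioi zero_le_one)).trans_lt
      (tail_lt_top hB hq0 hq1 r)
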